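/- (Monotonicity of the reward program transformation.) Let S be a pGCL program and let f, g : ℝ≥0∞ → ℝ≥0∞ be monotone functions with f(x) ≤ g(x) for all x. Then for every expectation X, wp[T_f(S)](X) ≤ wp[T_g(S)](X) pointwise. -/

import Mathlib

open ENNReal

/-- Program states: maps from variables to extended non-negative reals. -/
abbrev PState (V : Type) := V → ℝ≥0∞

/-- Expectations: maps from states to extended non-negative reals. -/
abbrev Expct (V : Type) := PState V → ℝ≥0∞

/-- Syntax of pGCL programs. -/
inductive pGCL (V : Type) : Type 1
  | skip : pGCL V
  | assign : V → Expct V → pGCL V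
  | reward : Expct V → pGCL V
  | seq : pGCL V → pGCL V → pGCL V
  | prob : (p : ℝ≥0∞) → p ≤ 1 → pGCL V → pGCL V → pGCL V
  | ifte : (PState V → Bool) → pGCL V → pGCL V → pGCL V
  | loop : (PState V → Bool) → pGCL V → pGCL V

variable {V : Type} [DecidableEq V]

/-- The weakest pre-expectation transformer, bundled as an order hom. -/
noncomputable def wpHom : pGCL V → (Expct V →o Expct V)
  | .skip => OrderHom.id
  | .assign x e => ⟨fun X σ => X (Function.update σ x (e σ)), fun _ _ h σ => h _⟩
  | .reward e => ⟨fun X σ => e σ + X σ, fun _ _ h σ => add_le_add le_rfl (h σ)⟩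
  | .seq S₁ S₂ => (wpHom S₁).comp (wpHom S₂)
  | .prob p _ S₁ S₂ =>
      ⟨fun X σ => p * wpHom S₁ X σ + (1 - p) * wpHom S₂ X σ, by
        intro X Y h σ
        exact add_le_add (mul_le_mul' le_rfl ((wpHom S₁).monotone h σ))
          (mul_le_mul' le_rfl ((wpHom S₂).monotone h σ))⟩
  | .ifte b S₁ S₂ =>
      ⟨fun X σ => if b σ then wpHom S₁ X σ else wpHom S₂ X σ, by
        intro X Y h σ
        dsimp only
        split
        · exact (wpHom S₁).monotone h σ
        · exact (wpHom S₂).monotone h σ⟩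
  | .loop b S =>
      ⟨fun X => OrderHom.lfp
        ⟨fun Y σ => if b σ then wpHom S Y σ else X σ, by
          intro Y₁ Y₂ h σ
          dsimp only
          split
          · exact (wpHom S).monotone h σ
          · exact le_rfl⟩, by
        intro X₁ X₂ h
        apply OrderHom.lfp_le
        have := OrderHom.map_lfp
          (⟨fun Y σ => if b σ then wpHom S Y σ else X₂ σ, by
            intro Y₁ Y₂ h σ
            dsimp only
            split
            · exact (wpHom S).monotone h σ
            · exact le_rfl⟩ : Expct V →o Expct V)
        refine le_trans (fun σ => ?_) (le_of_eq this)
        show (if b σ then wpHom S _ σ else X₁ σ) ≤ (if b σ then wpHom S _ σ else X₂ σ)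
        split
        · exact le_rfl
        · exact h σ⟩

/-- The weakest pre-expectation `wp[S](X)`. -/
noncomputable def wp (S : pGCL V) (X : Expct V) : Expct V := wpHom S X

/-- An expression does not depend on variable `τ`. -/
def UnusedE (τ : V) (e : Expct V) : Prop := ∀ σ v, e (Function.update σ τ v) = e σ

/-- A Boolean guard does not depend on variable `τ`. -/
def UnusedB (τ : V) (b : PState V → Bool) : Prop := ∀ σ v, b (Function.update σ τ v) = b σ

/-- Variable `τ` does not occur in the program `S`. -/
def NotOccurs (τ : V) : pGCL V → Prop
  | .skip => True
  | .assign x e => x ≠ τ ∧ UnusedE τ e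
  | .reward e => UnusedE τ e
  | .seq S₁ S₂ => NotOccurs τ S₁ ∧ NotOccurs τ S₂
  | .prob _ _ S₁ S₂ => NotOccurs τ S₁ ∧ NotOccurs τ S₂
  | .ifte b S₁ S₂ => UnusedB τ b ∧ NotOccurs τ S₁ ∧ NotOccurs τ S₂
  | .loop b S => UnusedB τ b ∧ NotOccurs τ S

/-- Auxiliary reward transformation `T'_f` with ghost variable `τ`:
replaces `reward(e)` by `reward(f(τ+e) − f(τ)); τ := τ + e`. -/
noncomputable def Taux (τ : V) (f : ℝ≥0∞ → ℝ≥0∞) : pGCL V → pGCL V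
  | .reward e =>
      .seq (.reward fun σ => f (σ τ + e σ) - f (σ τ)) (.assign τ (fun σ => σ τ + e σ))
  | .seq S₁ S₂ => .seq (Taux τ f S₁) (Taux τ f S₂)
  | .prob p hp S₁ S₂ => .prob p hp (Taux τ f S₁) (Taux τ f S₂)
  | .ifte b S₁ S₂ => .ifte b (Taux τ f S₁) (Taux τ f S₂)
  | .loop b S => .loop b (Taux τ f S)
  | .skip => .skip
  | .assign x e => .assign x e

/-- Full reward transformation `T_f(S) = τ := 0; reward(f(0)); T'_f(S)`. -/
noncomputable def Tfull (τ : V) (f : ℝ≥0∞ → ℝ≥0∞) (S : pGCL V) : pGCL V :=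
  .seq (.assign τ (fun _ => 0)) (.seq (.reward fun _ => f 0) (Taux τ f S))

/-- Key invariant: adding the accumulated value `f τ` makes the transformation monotone. -/
theorem Taux_key (f g : ℝ≥0∞ → ℝ≥0∞)
    (hf : Monotone f) (hg : Monotone g) (hfg : ∀ x, f x ≤ g x) (τ : V) (S : pGCL V) :
    NotOccurs τ S → ∀ X Y : Expct V, (∀ σ, f (σ τ) + X σ ≤ g (σ τ) + Y σ) →
      ∀ σ, f (σ τ) + wpHom (Taux τ f S) X σ ≤ g (σ τ) + wpHom (Taux τ g S) Y σ := by
  induction S with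
  | skip => intro _ X Y h σ; exact h σ
  | assign x e =>
    intro hn X Y h σ
    have := h (Function.update σ x (e σ))
    rw [Function.update_of_ne (Ne.symm hn.1)] at this
    exact this
  | reward e =>
    intro hn X Y h σ
    have := h (Function.update σ τ (σ τ + e σ))
    rw [Function.update_self] at this
    change f (σ τ) + ((f (σ τ + e σ) - f (σ τ)) + X (Function.update σ τ (σ τ + e σ)))
      ≤ g (σ τ) + ((g (σ τ + e σ) - g (σ τ)) + Y (Function.update σ τ (σ τ + e σ)))
    rw [← add_assoc, ← add_assoc, add_tsub_cancel_of_le (hf le_self_add),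
      add_tsub_cancel_of_le (hg le_self_add)]
    exact this
  | seq S₁ S₂ ih₁ ih₂ =>
    intro hn X Y h
    exact ih₁ hn.1 _ _ (ih₂ hn.2 X Y h)
  | prob p hp S₁ S₂ ih₁ ih₂ =>
    intro hn X Y h σ
    have h1 := ih₁ hn.1 X Y h σ
    have h2 := ih₂ hn.2 X Y h σ
    have key : ∀ c A B : ℝ≥0∞,
        c + (p * A + (1 - p) * B) = p * (c + A) + (1 - p) * (c + B) := by
      intro c A B
      have hc : c = p * c + (1 - p) * c := by
        rw [← add_mul, add_tsub_cancel_of_le hp, one_mul]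
      calc c + (p * A + (1 - p) * B)
          = (p * c + (1 - p) * c) + (p * A + (1 - p) * B) := by rw [← hc]
        _ = _ := by ring
    change f (σ τ) + (p * _ + (1 - p) * _) ≤ g (σ τ) + (p * _ + (1 - p) * _)
    rw [key, key]
    exact add_le_add (mul_le_mul' le_rfl h1) (mul_le_mul' le_rfl h2)
  | ifte b S₁ S₂ ih₁ ih₂ =>
    intro hn X Y h σ
    change f (σ τ) + (if b σ then _ else _) ≤ g (σ τ) + (if b σ then _ else _)
    split
    · exact ih₁ hn.2.1 X Y h σ
    · exact ih₂ hn.2.2 X Y h σ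
  | loop b S ih =>
    intro hn X Y h
    have unf : ∀ σ, wpHom (Taux τ g (.loop b S)) Y σ =
        if b σ then wpHom (Taux τ g S) (wpHom (Taux τ g (.loop b S)) Y) σ else Y σ := by
      intro σ
      exact (congrFun (OrderHom.map_lfp
        (⟨fun Z σ => if b σ then wpHom (Taux τ g S) Z σ else Y σ, by
            intro Y₁ Y₂ h σ
            dsimp only
            split
            · exact (wpHom _).monotone h σ
            · exact le_rfl⟩ : Expct V →o Expct V)) σ).symm
    generalize wpHom (Taux τ g (.loop b S)) Y = W at unf ⊢
    change ∀ σ, f (σ τ) + (OrderHom.lfp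
      (⟨fun Z σ => if b σ then wpHom (Taux τ f S) Z σ else X σ, _⟩ : Expct V →o Expct V)) σ
        ≤ g (σ τ) + W σ
    refine OrderHom.lfp_induction _
      (p := fun Z : Expct V => ∀ σ, f (σ τ) + Z σ ≤ g (σ τ) + W σ) ?_ ?_
    · intro Z hZ _ σ
      rw [unf]
      change f (σ τ) + (if b σ then wpHom (Taux τ f S) Z σ else X σ) ≤ _
      split
      · exact ih hn.2 Z W hZ σ
      · exact h σ
    · intro s hs σ
      rw [sSup_apply]
      rcases isEmpty_or_nonempty s with he | he
      · rw [iSup_of_empty]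
        exact add_le_add (hfg _) bot_le
      · rw [ENNReal.add_iSup]
        exact iSup_le fun a => hs a.1 a.2 σ

/-- Monotonicity of the reward program transformation:
for monotone `f ≤ g`, `wp[T_f(S)](X) ≤ wp[T_g(S)](X)` pointwise. -/
theorem wp_Tfull_mono (S : pGCL V) (f g : ℝ≥0∞ → ℝ≥0∞)
    (hf : Monotone f) (hg : Monotone g) (hfg : ∀ x, f x ≤ g x)
    (τ : V) (hτ : NotOccurs τ S) (X : Expct V) :
    wp (Tfull τ f S) X ≤ wp (Tfull τ g S) X := by
  intro σ
  have := Taux_key f g hf hg hfg τ S hτ X X (fun σ => add_le_add (hfg _) le_rfl)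
    (Function.update σ τ 0)
  rw [Function.update_self] at this
  exact this
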